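/- arXiv:2408.06392 — 3 statements merged into one kernel-verified Lean document; each statement's English description precedes it below -/
import Mathlib

section
/- (Discrete Borsuk–Ulam theorem.) Suppose a closed polygonal line A₁…A_{2k} does not pass through a point O (i.e., O is not in the union of its segments), and is symmetric with respect to O, meaning O is the midpoint of the segment AⱼA_{k+j} for every j = 1, …, k. Then the winding number w(A₁…A_{2k}, O) is an odd integer. -/
/-- Discrete Borsuk–Ulam theorem: Suppose a closed polygonal line
`A₁…A_{2k}` (encoded as a `2k`-periodic sequence `A : ℕ → ℂ`) does not pass through a
point `O` (i.e. `O` is not in the union of its segments), and is symmetric with respect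
to `O` (i.e. `O` is the midpoint of the segment `AⱼA_{k+j}` for every `j`). Then the
winding number `w(A₁…A_{2k}, O) = (∠A₁OA₂ + ⋯ + ∠A_{2k-1}OA_{2k} + ∠A_{2k}OA₁)/(2π)`
is an odd integer.  Here `∠AOB := Complex.arg ((B − O)/(A − O)) ∈ (−π, π]`. -/
theorem discrete_borsuk_ulam (k : ℕ) (hk : 0 < k) (O : ℂ) (A : ℕ → ℂ)
    (hper : ∀ j, A (j + 2 * k) = A j)
    (hsym : ∀ j, A j + A (j + k) = 2 * O)
    (hO : ∀ j, O ∉ segment ℝ (A j) (A (j + 1))) :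
    ∃ n : ℤ, Odd n ∧
      (∑ j ∈ Finset.range (2 * k), Complex.arg ((A (j + 1) - O) / (A j - O))) /
        (2 * Real.pi) = n := by
  obtain ⟨a, ha⟩ : ∃ a : ℕ → ℂ, ∀ j, a j = A j - O := ⟨fun j => A j - O, fun _ => rfl⟩
  simp only [← ha]
  have hne : ∀ j, a j ≠ 0 := by
    intro j h
    rw [ha, sub_eq_zero] at h
    exact hO j (h ▸ left_mem_segment ℝ _ _)
  have hs : ∀ j, a (j + k) = - a j := by
    intro j
    rw [ha, ha]
    linear_combination hsym j
  have key : ∀ n : ℕ, a n * (‖a 0‖ : ℂ) = a 0 * (‖a n‖ : ℂ) *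
      Complex.exp ((∑ j ∈ Finset.range n, Complex.arg (a (j + 1) / a j) : ℝ) * Complex.I) := by
    intro n
    induction n with
    | zero => simp
    | succ n ih =>
      have h1 := Complex.norm_mul_exp_arg_mul_I (a (n + 1) / a n)
      rw [Finset.sum_range_succ, Complex.ofReal_add, add_mul, Complex.exp_add]
      have hn : (‖a n‖ : ℂ) ≠ 0 := by exact_mod_cast norm_ne_zero_iff.mpr (hne n)
      have hn' := hne n
      rw [norm_div, Complex.ofReal_div] at h1
      generalize Complex.exp ((Complex.arg (a (n + 1) / a n) : ℂ) * Complex.I) = e at *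
      generalize Complex.exp _ = f at *
      field_simp at h1
      apply mul_left_cancel₀ (mul_ne_zero hn hn')
      linear_combination (‖a (n+1)‖ * a n * e) * ih - a n * ‖a 0‖ * h1
  have hk1 := key k
  have h0 := hs 0
  rw [zero_add] at h0
  rw [h0, norm_neg] at hk1
  have hn : (‖a 0‖ : ℂ) ≠ 0 := by exact_mod_cast norm_ne_zero_iff.mpr (hne 0)
  have he : Complex.exp ((∑ j ∈ Finset.range k, Complex.arg (a (j + 1) / a j) : ℝ) * Complex.I)
      = Complex.exp (Real.pi * Complex.I) := by
    rw [Complex.exp_pi_mul_I]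
    apply mul_left_cancel₀ (mul_ne_zero (hne 0) hn)
    rw [← hk1]; ring
  obtain ⟨m, hm⟩ := Complex.exp_eq_exp_iff_exists_int.mp he
  have hS : (∑ j ∈ Finset.range k, Complex.arg (a (j + 1) / a j)) = Real.pi + m * (2 * Real.pi) := by
    have := congrArg Complex.im hm
    simpa using this
  refine ⟨2 * m + 1, ⟨m, rfl⟩, ?_⟩
  have h2 : ∀ j, a (k + j + 1) / a (k + j) = a (j + 1) / a j := by
    intro j
    rw [show k + j + 1 = (j + 1) + k by ring, show k + j = j + k by ring, hs, hs, neg_div_neg_eq]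
  rw [two_mul k, Finset.sum_range_add]
  simp only [h2]
  rw [hS, div_eq_iff (by positivity)]
  push_cast
  ring
end

section
/- Let L be a closed polygonal line in the plane, and let P₀ and P₁ be points joined by a polygonal line whose image is disjoint from the image of L. Then w(L, P₀) = w(L, P₁). -/
/-- Sum of the oriented angles ∠A₁OA₂ + ∠A₂OA₃ + ⋯ + ∠A_{m−1}OA_m at `O`
along a polygonal line given as a list of points in the plane `ℂ`,
where ∠AOB := Complex.arg ((B − O)/(A − O)) ∈ (−π, π]. -/
noncomputable def angSum (O : ℂ) : List ℂ → ℝ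
  | a :: b :: rest => Complex.arg ((b - O) / (a - O)) + angSum O (b :: rest)
  | _ => 0

/-- `w'(A₁…A_m, O)`: the (non-closed) winding number of a polygonal line around `O`,
i.e. `(∠A₁OA₂ + ⋯ + ∠A_{m−1}OA_m) / (2π)`. -/
noncomputable def wp (O : ℂ) (l : List ℂ) : ℝ := angSum O l / (2 * Real.pi)

/-- `w(A₁…A_m, O)`: the winding number of the closed polygonal line `A₁…A_m` around `O`,
i.e. `(∠A₁OA₂ + ⋯ + ∠A_{m−1}OA_m + ∠A_mOA₁) / (2π)`. -/
noncomputable def wcl (O : ℂ) (l : List ℂ) : ℝ := wp O (l ++ [l.headI])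

/-- The image of a polygonal line: the union of the segments between consecutive points. -/
def imagePL : List ℂ → Set ℂ
  | [] => ∅
  | [a] => {a}
  | a :: b :: rest => segment ℝ a b ∪ imagePL (b :: rest)

theorem slit_aux (a b O : ℂ) (h : O ∉ segment ℝ a b) : (b - O) / (a - O) ∈ Complex.slitPlane := by
  have ha : a - O ≠ 0 := fun h' => h (by rw [← sub_eq_zero.mp h']; exact left_mem_segment ℝ _ _)
  by_contra hs
  rw [Complex.mem_slitPlane_iff, not_or, not_lt, not_not] at hs
  obtain ⟨h1, h2⟩ := hs
  set z := (b - O) / (a - O) with hz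
  have hb : b - O = z * (a - O) := by rw [hz]; field_simp
  obtain ⟨t, ht⟩ : ∃ t : ℝ, t = -z.re := ⟨_, rfl⟩
  have ht0 : 0 ≤ t := by linarith
  have hzt : z = -(t : ℂ) := by
    apply Complex.ext <;> simp [ht, h2]
  apply h
  have hp : (1 + t) ≠ 0 := by positivity
  have hpc : (1 + t : ℂ) ≠ 0 := by exact_mod_cast hp
  refine ⟨t / (1 + t), 1 / (1 + t), by positivity, by positivity, by field_simp; ring, ?_⟩
  rw [hzt] at hb
  simp only [Complex.real_smul]
  push_cast
  field_simp
  linear_combination hb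

theorem head_mem_aux (a : ℂ) (l : List ℂ) : a ∈ imagePL (a :: l) := by
  cases l with
  | nil => simp [imagePL]
  | cons b l => exact Or.inl (left_mem_segment ℝ _ _)

theorem last_mem_aux (l : List ℂ) (h : l ≠ []) : l.getLast h ∈ imagePL l := by
  induction l with
  | nil => exact absurd rfl h
  | cons a l ih =>
    cases l with
    | nil => simp [imagePL]
    | cons b l => exact Or.inr (by simpa using ih (by simp))

theorem preconn_aux (l : List ℂ) : IsPreconnected (imagePL l) := by
  induction l with
  | nil => exact isPreconnected_empty
  | cons a l ih =>
    cases l with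
    | nil => exact isPreconnected_singleton
    | cons b l =>
      exact IsPreconnected.union b (right_mem_segment ℝ _ _) (head_mem_aux b l)
        (convex_segment a b).isPreconnected ih

theorem cont_aux (l : List ℂ) (S : Set ℂ) (h : Disjoint (imagePL l) S) :
    ContinuousOn (fun O => angSum O l) S := by
  induction l with
  | nil => exact continuousOn_const
  | cons a l ih =>
    cases l with
    | nil => exact continuousOn_const
    | cons b l =>
      simp only [imagePL, Set.disjoint_union_left] at h
      refine ContinuousOn.add ?_ (ih h.2)
      intro O hO
      have hs : O ∉ segment ℝ a b := fun h' => Set.disjoint_left.mp h.1 h' hO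
      have ha : a - O ≠ 0 := fun h' => hs (by rw [← sub_eq_zero.mp h']; exact left_mem_segment ℝ _ _)
      apply ContinuousAt.continuousWithinAt
      refine ContinuousAt.comp (f := fun O => (b - O) / (a - O)) (g := Complex.arg)
        (Complex.continuousAt_arg (slit_aux a b O hs)) ?_
      exact ContinuousAt.div (by fun_prop) (by fun_prop) ha

theorem ang_aux (O a : ℂ) (l : List ℂ) (h : O ∉ imagePL (a :: l)) :
    (angSum O (a :: l) : Real.Angle) =
      (Complex.arg ((a :: l).getLast (by simp) - O) : Real.Angle) - (Complex.arg (a - O) : Real.Angle) := by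
  induction l generalizing a with
  | nil => simp [angSum]
  | cons b l ih =>
    have h2 : O ∉ imagePL (b :: l) := fun h' => h (Or.inr h')
    have ha : a - O ≠ 0 := fun h' => h (by rw [← sub_eq_zero.mp h']; exact head_mem_aux _ _)
    have hb : b - O ≠ 0 := fun h' => h2 (by rw [← sub_eq_zero.mp h']; exact head_mem_aux _ _)
    rw [angSum, Real.Angle.coe_add, ih b h2, Complex.arg_div_coe_angle hb ha,
      List.getLast_cons (by simp : b :: l ≠ [])]
    abel

theorem winding_constant_on_connected_complement (L P : List ℂ)
    (hL : L ≠ []) (hP : P ≠ [])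
    (P₀ P₁ : ℂ) (h0 : P.headI = P₀) (h1 : P.getLast hP = P₁)
    (hdisj : Disjoint (imagePL (L ++ [L.headI])) (imagePL P)) :
    wcl P₀ L = wcl P₁ L := by
  have hm0 : P₀ ∈ imagePL P := by
    cases P with
    | nil => exact absurd rfl hP
    | cons a l => subst h0; exact head_mem_aux _ _
  have hm1 : P₁ ∈ imagePL P := h1 ▸ last_mem_aux P hP
  have hc : ContinuousOn (fun O => wcl O L) (imagePL P) :=
    (cont_aux _ _ hdisj).div_const _
  have hsub : (fun O => wcl O L) '' imagePL P ⊆ Set.range ((↑) : ℤ → ℝ) := by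
    rintro _ ⟨O, hO, rfl⟩
    have hn : O ∉ imagePL (L ++ [L.headI]) := fun h' => Set.disjoint_left.mp hdisj h' hO
    cases L with
    | nil => exact absurd rfl hL
    | cons a l =>
      have := ang_aux O a (l ++ [a]) hn
      simp only [← List.cons_append, List.getLast_append_singleton, sub_self] at this
      rw [← Real.Angle.coe_zero, Real.Angle.angle_eq_iff_two_pi_dvd_sub] at this
      obtain ⟨k, hk⟩ := this
      refine ⟨k, ?_⟩
      have hpi := Real.pi_ne_zero
      simp only [wcl, wp, List.headI]
      rw [sub_zero] at hk
      rw [hk]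
      field_simp
  have hpre := (preconn_aux P).image _ hc
  exact ((Set.countable_range _).mono hsub).isTotallyDisconnected _ subset_rfl hpre
    ⟨P₀, hm0, rfl⟩ ⟨P₁, hm1, rfl⟩
end

section
/- Let l₁, l₂, l₃ be polygonal lines in the plane joining a point O to points A₁, A₂, A₃ respectively, such that Aᵢ does not lie on the image of lⱼ whenever i ≠ j. Then the triodic Wu number wu(l₁, l₂, l₃) := 2·(w'(l̄₂l₃, A₁) + w'(l̄₁l₂, A₃) + w'(l̄₃l₁, A₂)) is an odd integer, where l̄ denotes the reverse of l and l̄ᵢlⱼ denotes the concatenation of l̄ᵢ and lⱼ (a polygonal line from Aᵢ through O to Aⱼ). -/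
lemma mem_imagePL (x : ℂ) : ∀ l : List ℂ, x ∈ l → x ∈ imagePL l
  | [], h => by simp at h
  | [a], h => by simpa [imagePL] using h
  | a :: b :: rest, h => by
    rcases List.mem_cons.1 h with h | h
    · subst h
      exact Or.inl (left_mem_segment ℝ _ _)
    · exact Or.inr (mem_imagePL x _ h)

lemma exp_angSum (X : ℂ) : ∀ (l : List ℂ) (hn : l ≠ []), (∀ x ∈ l, x ≠ X) →
    ∃ r : ℝ, 0 < r ∧ Complex.exp (angSum X l * Complex.I) * (l.headI - X)
      = r * (l.getLast hn - X)
  | [], hn, _ => absurd rfl hn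
  | [a], _, _ => ⟨1, one_pos, by simp [angSum]⟩
  | a :: b :: rest, hn, h => by
    obtain ⟨r, hr, e⟩ := exp_angSum X (b :: rest) (by simp) (fun x hx => h x (by simp [hx]))
    have ha : a - X ≠ 0 := sub_ne_zero.2 (h a (by simp))
    have hb : b - X ≠ 0 := sub_ne_zero.2 (h b (by simp))
    have hq : 0 < ‖(b - X) / (a - X)‖ := norm_pos_iff.2 (div_ne_zero hb ha)
    have hp := Complex.norm_mul_exp_arg_mul_I ((b - X) / (a - X))
    refine ⟨r / ‖(b - X) / (a - X)‖, div_pos hr hq, ?_⟩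
    set q := ‖(b - X) / (a - X)‖
    have hq' : (q : ℂ) ≠ 0 := by exact_mod_cast hq.ne'
    rw [List.getLast_cons (by simp)]
    simp only [angSum, List.headI] at e ⊢
    push_cast
    rw [add_mul, Complex.exp_add, div_mul_eq_mul_div, ← e, eq_div_iff hq']
    rw [eq_div_iff ha] at hp
    linear_combination Complex.exp (angSum X (b :: rest) * Complex.I) * hp

lemma exp_angSum_append (X A B : ℂ) (l m : List ℂ) (hl : l ≠ []) (hm : m ≠ [])
    (hA : l.getLast hl = A) (hB : m.getLast hm = B)
    (h1 : X ∉ imagePL l) (h2 : X ∉ imagePL m) :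
    ∃ r : ℝ, 0 < r ∧ Complex.exp (angSum X (l.reverse ++ m) * Complex.I) * (A - X)
      = r * (B - X) := by
  obtain ⟨r, hr, e⟩ := exp_angSum X (l.reverse ++ m) (by simp [hm]) (by
    rintro x hx rfl
    rcases List.mem_append.1 hx with h | h
    · exact h1 (mem_imagePL _ _ (List.mem_reverse.1 h))
    · exact h2 (mem_imagePL _ _ h))
  refine ⟨r, hr, ?_⟩
  have hh : (l.reverse ++ m).headI = A := by
    subst hA
    conv_lhs => rw [← List.dropLast_append_getLast hl]
    simp
  rw [hh, List.getLast_append_of_ne_nil _ hm, hB] at e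
  exact e

/-- Let `l₁, l₂, l₃` be polygonal lines in the plane joining a point `O`
to points `A₁, A₂, A₃` respectively, such that `Aᵢ` does not lie on the image of `lⱼ`
whenever `i ≠ j`. Then the triodic Wu number
`wu(l₁, l₂, l₃) := 2·(w'(l̄₂l₃, A₁) + w'(l̄₁l₂, A₃) + w'(l̄₃l₁, A₂))`
is an odd integer, where `l̄` denotes the reverse of `l` and `l̄ᵢlⱼ` is the
concatenation of `l̄ᵢ` and `lⱼ` (a polygonal line from `Aᵢ` through `O` to `Aⱼ`). -/
theorem triodic_wu_number_odd (O A₁ A₂ A₃ : ℂ) (l₁ l₂ l₃ : List ℂ)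
    (hn1 : l₁ ≠ []) (hn2 : l₂ ≠ []) (hn3 : l₃ ≠ [])
    (hh1 : l₁.headI = O) (hh2 : l₂.headI = O) (hh3 : l₃.headI = O)
    (he1 : l₁.getLast hn1 = A₁) (he2 : l₂.getLast hn2 = A₂) (he3 : l₃.getLast hn3 = A₃)
    (h12 : A₁ ∉ imagePL l₂) (h13 : A₁ ∉ imagePL l₃)
    (h21 : A₂ ∉ imagePL l₁) (h23 : A₂ ∉ imagePL l₃)
    (h31 : A₃ ∉ imagePL l₁) (h32 : A₃ ∉ imagePL l₂) :
    ∃ n : ℤ, Odd n ∧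
      2 * (wp A₁ (l₂.reverse ++ l₃) + wp A₃ (l₁.reverse ++ l₂) +
        wp A₂ (l₃.reverse ++ l₁)) = n := by
  have m1 : A₁ ∈ imagePL l₁ := mem_imagePL _ _ (he1 ▸ List.getLast_mem hn1)
  have m2 : A₂ ∈ imagePL l₂ := mem_imagePL _ _ (he2 ▸ List.getLast_mem hn2)
  have d12 : A₂ - A₁ ≠ 0 := sub_ne_zero.2 (by rintro rfl; exact h12 m2)
  have d13 : A₁ - A₃ ≠ 0 := sub_ne_zero.2 (by rintro rfl; exact h31 m1)
  have d23 : A₃ - A₂ ≠ 0 := sub_ne_zero.2 (by rintro rfl; exact h32 m2)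
  obtain ⟨r, hr, er⟩ := exp_angSum_append A₁ A₂ A₃ l₂ l₃ hn2 hn3 he2 he3 h12 h13
  obtain ⟨s, hs, es⟩ := exp_angSum_append A₃ A₁ A₂ l₁ l₂ hn1 hn2 he1 he2 h31 h32
  obtain ⟨t, ht, et⟩ := exp_angSum_append A₂ A₃ A₁ l₃ l₁ hn3 hn1 he3 he1 h23 h21
  unfold wp
  set a := angSum A₁ (l₂.reverse ++ l₃)
  set b := angSum A₃ (l₁.reverse ++ l₂)
  set c := angSum A₂ (l₃.reverse ++ l₁)
  have key : Complex.exp ((a + b + c : ℝ) * Complex.I) = -((r * s * t : ℝ) : ℂ) := by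
    have hD : (A₂ - A₁) * (A₁ - A₃) * (A₃ - A₂) ≠ 0 := mul_ne_zero (mul_ne_zero d12 d13) d23
    apply mul_right_cancel₀ hD
    push_cast
    rw [add_mul, add_mul, Complex.exp_add, Complex.exp_add]
    calc _ = (Complex.exp (a * Complex.I) * (A₂ - A₁)) * (Complex.exp (b * Complex.I) * (A₁ - A₃))
          * (Complex.exp (c * Complex.I) * (A₃ - A₂)) := by ring
      _ = _ := by rw [er, es, et]; ring
  have hpos : 0 < r * s * t := by positivity
  have h1 : r * s * t = 1 := by
    have := congrArg norm key
    rw [Complex.norm_exp_ofReal_mul_I, norm_neg, Complex.norm_real, Real.norm_of_nonneg hpos.le] at this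
    exact this.symm
  rw [h1, Complex.ofReal_one, ← Complex.exp_pi_mul_I, Complex.exp_eq_exp_iff_exists_int] at key
  obtain ⟨n, hn⟩ := key
  have hn' : a + b + c = Real.pi + n * (2 * Real.pi) := by
    have := congrArg Complex.im hn
    simpa using this
  refine ⟨2 * n + 1, ⟨n, rfl⟩, ?_⟩
  have := Real.pi_ne_zero
  rw [← add_div, ← add_div, hn']
  push_cast
  field_simp
  ring
end
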